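/- arXiv:2404.11407 — 4 statements merged into one kernel-verified Lean document; each statement's English description precedes it below -/
import Mathlib

section
/- Approval-STV satisfies generalized Proportionality for Solid Coalitions: for every profile of n weak orders over C, every committee size k, and every committee W returned by any execution of Approval-STV, the following holds with quota q = n/(k+1): for every integer ℓ ≥ 1, every set of voters S ⊆ N with |S| > ℓ·q, and every set of candidates T ⊆ C with |T| ≥ ℓ such that S is T-supporting, we have |W ∩ closure_S(T)| ≥ ℓ. -/
/-!
Let `K = closureSet P S T`. While a candidate of `T` remains, every candidate supported by a
member of `S` lies in `K`, so `S` pays only for members of `K`, at most `q` for each. Hence the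
remaining budget of `S` is at least `|S| - q * |W ∩ K|`. Together with `ℓ ≤ |W ∩ K| + |R ∩ T|`
this is preserved as long as `|W ∩ K| < ℓ` (`STVInv.step`).

The delicate step is the elimination of a candidate of `T`. If `m = |R ∩ T|` and
`|W ∩ K| + m = ℓ`, then `S` holds more than `m * q`. Each member of `S` supports some member
of `R ∩ T`, because it ranks candidates of `T` weakly above all others. By averaging, some
member of `R ∩ T` has support above `q`, so no elimination can take place
(`budget_le_of_no_eligible`). At termination `R = ∅`, and the inequality `ℓ ≤ |W ∩ K| + |R ∩ T|`
is the claim.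
-/

open Finset

attribute [local instance] Classical.propDecidable

/-- A weak order on a candidate type `C`: a complete and transitive binary relation. -/
structure WeakOrder (C : Type*) where
  rel : C → C → Prop
  total : ∀ a b, rel a b ∨ rel b a
  trans : ∀ a b c, rel a b → rel b c → rel a c

namespace WeakOrder

variable {C : Type*}

/-- Strict preference. -/
def strict (w : WeakOrder C) (a b : C) : Prop :=
  w.rel a b ∧ ¬ w.rel b a

/-- Indifference. -/
def indiff (w : WeakOrder C) (a b : C) : Prop :=
  w.rel a b ∧ w.rel b a

/-- The set of top-ranked candidates of `w` within the candidate set `A`. -/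
noncomputable def topSet (w : WeakOrder C) (A : Finset C) : Finset C :=
  A.filter fun c => ∀ d ∈ A, w.rel c d

variable [DecidableEq C]

/-- Number of candidates in `A` strictly preferred to `a`. -/
noncomputable def cardAbove (w : WeakOrder C) (A : Finset C) (a : C) : ℕ :=
  (A.filter fun b => w.strict b a).card

/-- The (0-based) index of the indifference class of `a` within `A`
(0 = top indifference class). -/
noncomputable def classIdx (w : WeakOrder C) (A : Finset C) (a : C) : ℕ :=
  ((A.filter fun b => w.strict b a).image (w.cardAbove A)).card

/-- The number of indifference classes of `w` on `A`. -/
noncomputable def numClasses (w : WeakOrder C) (A : Finset C) : ℕ :=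
  (A.image (w.cardAbove A)).card

/-- The order type of `w` on `A`: the list of sizes of its indifference classes,
from the top class downwards. -/
noncomputable def orderType (w : WeakOrder C) (A : Finset C) : List ℕ :=
  (List.range (w.numClasses A)).map fun j => (A.filter fun a => w.classIdx A a = j).card

end WeakOrder

/-- Weak order induced by a rank function (smaller rank = more preferred). -/
def ofRank {C : Type*} (ρ : C → ℕ) : WeakOrder C where
  rel a b := ρ a ≤ ρ b
  total a b := le_total _ _
  trans _ _ _ hab hbc := le_trans hab hbc

section Rules

variable {C N : Type*} [DecidableEq C] [Fintype N]

/-- The score of candidate `a` in profile `P` on remaining candidate set `A`,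
under the scoring system `s` (which maps an order type and a 0-based class index
to a real score). -/
noncomputable def totalScore (s : List ℕ → ℕ → ℝ) (P : N → WeakOrder C)
    (A : Finset C) (a : C) : ℝ :=
  ∑ i : N, s ((P i).orderType A) ((P i).classIdx A a)

/-- The set of lowest-scoring candidates in `A`. -/
noncomputable def lowest (s : List ℕ → ℕ → ℝ) (P : N → WeakOrder C)
    (A : Finset C) : Finset C :=
  A.filter fun c => ∀ d ∈ A, totalScore s P A c ≤ totalScore s P A d

/-- Fuel-based helper for the elimination scoring rule. -/
noncomputable def winnersAux (s : List ℕ → ℕ → ℝ) (P : N → WeakOrder C) :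
    ℕ → Finset C → Finset C
  | 0, A => A
  | n + 1, A =>
    if A.card ≤ 1 then A
    else (lowest s P A).biUnion fun c => winnersAux s P n (A.erase c)

/-- The elimination scoring rule associated with scoring system `s`: repeatedly
eliminate a lowest-scoring candidate (parallel-universe tie-breaking) until one
candidate remains. -/
noncomputable def winners (s : List ℕ → ℕ → ℝ) (P : N → WeakOrder C)
    (A : Finset C) : Finset C :=
  winnersAux s P A.card A

/-- Approval score: the number of voters ranking `c` in their top indifference
class within `A`. -/
noncomputable def approvalScore (P : N → WeakOrder C) (A : Finset C) (c : C) : ℕ :=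
  (Finset.univ.filter fun i => c ∈ (P i).topSet A).card

end Rules

/-- The approval scoring system: `s(τ) = (1,0,…,0)` for every order type `τ`
(with `s(τ) = (0)` when `|τ| = 1`). -/
noncomputable def approvalScoring : List ℕ → ℕ → ℝ :=
  fun τ j => if j = 0 ∧ 2 ≤ τ.length then 1 else 0

/-- The split scoring system: `s(τ) = (1/τ(1),0,…,0)` for every order type `τ`
(with `s(τ) = (0)` when `|τ| = 1`). -/
noncomputable def splitScoring : List ℕ → ℕ → ℝ :=
  fun τ j => if j = 0 ∧ 2 ≤ τ.length then ((τ.headI : ℝ))⁻¹ else 0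

/-- The Borda-style scoring system:
`s(τ) = (m−1, m−1−τ(1), …, m−1−∑_{i<k−1} τ(i))` where `m = τ.sum`. -/
noncomputable def bordaScoring : List ℕ → ℕ → ℝ :=
  fun τ j => ((τ.sum : ℝ) - 1) - (((τ.take j).sum : ℕ) : ℝ)

/-- Nonnegativity of a scoring system. -/
def NonnegSys (s : List ℕ → ℕ → ℝ) : Prop := ∀ τ j, 0 ≤ s τ j

/-- The last score value of every (nonempty) order type is zero. -/
def LastZeroSys (s : List ℕ → ℕ → ℝ) : Prop :=
  ∀ τ : List ℕ, τ ≠ [] → s τ (τ.length - 1) = 0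

/-- Monotonicity of a scoring system: earlier indifference classes get weakly
higher scores. -/
def MonotoneSys (s : List ℕ → ℕ → ℝ) : Prop :=
  ∀ τ i j, i ≤ j → s τ j ≤ s τ i

section CloneHoverEtc

variable {C N : Type*}

/-- `X` is a clone set in the profile `P` relative to ambient candidate set `A`. -/
def IsCloneSet (P : N → WeakOrder C) (A X : Finset C) : Prop :=
  X ⊆ A ∧ ∀ i : N, ∀ c ∈ A, c ∉ X →
    (∀ x ∈ X, (P i).strict x c) ∨ (∀ x ∈ X, (P i).indiff x c) ∨
      (∀ x ∈ X, (P i).strict c x)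

/-- `w2` is obtained from `w` by a `c`-hover: `c` is alone in its (non-top)
indifference class in `w`, and in `w2` it is merged into the indifference class
directly above it, everything else being unchanged. -/
def IsCHover (w w2 : WeakOrder C) (c : C) : Prop :=
  (∀ x, x ≠ c → ¬ w.indiff c x) ∧
  (∃ b, w.strict b c) ∧
  (∀ a b, a ≠ c → (w2.rel a b ↔ w.rel a b)) ∧
  (∀ b, w2.rel c b ↔ (w.rel c b ∨ ((w.strict b c) ∧ ∀ y, w.strict y c → w.rel b y)))

/-- The sincere coarsening of `w` merging all candidates strictly preferred to
`b` into a single top indifference class, leaving the rest unchanged. -/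
def mergeAbove (w : WeakOrder C) (b : C) : WeakOrder C where
  rel u v := w.strict u b ∨ (¬ w.strict v b ∧ w.rel u v)
  total u v := by
    by_cases hu : w.strict u b
    · exact Or.inl (Or.inl hu)
    · by_cases hv : w.strict v b
      · exact Or.inr (Or.inl hv)
      · rcases w.total u v with h | h
        · exact Or.inl (Or.inr ⟨hv, h⟩)
        · exact Or.inr (Or.inr ⟨hu, h⟩)
  trans u v x huv hvx := by
    rcases huv with h | ⟨hv, huv⟩
    · exact Or.inl h
    · rcases hvx with h | ⟨hx, hvx⟩
      · exact absurd h hv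
      · exact Or.inr ⟨hx, w.trans _ _ _ huv hvx⟩

/-- Pairwise majority margin of `a` over `b`. -/
noncomputable def margin [Fintype N] (P : N → WeakOrder C) (a b : C) : ℤ :=
  ((Finset.univ.filter fun i => (P i).strict a b).card : ℤ) -
    ((Finset.univ.filter fun i => (P i).strict b a).card : ℤ)

end CloneHoverEtc

section STV

variable {C N : Type*} [DecidableEq C] [Fintype C] [Fintype N]

/-- The supporters of `c` among remaining candidates `R`: voters with `c` in
their top indifference class within `R`. -/
noncomputable def suppSet (P : N → WeakOrder C) (R : Finset C) (c : C) : Finset N :=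
  Finset.univ.filter fun i => ∀ d ∈ R, (P i).rel c d

/-- A state of the Approval-STV computation: remaining candidates, selected
candidates, and the budget of each voter. -/
structure STVState (C N : Type*) where
  R : Finset C
  W : Finset C
  b : N → ℝ

/-- One step of Approval-STV with quota `q`: either select an eligible candidate
(whose supporters hold strictly more than `q` budget), charging its supporters a
total of exactly `q`, or, if no candidate is eligible, eliminate some candidate. -/
inductive STVStep (P : N → WeakOrder C) (q : ℝ) : STVState C N → STVState C N → Prop
  | select (R W : Finset C) (b b' : N → ℝ) (c : C) (hc : c ∈ R)
      (helig : q < ∑ i ∈ suppSet P R c, b i)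
      (hpay : ∀ i ∉ suppSet P R c, b' i = b i)
      (hdec : ∀ i : N, b' i ≤ b i)
      (hnn : ∀ i : N, 0 ≤ b' i)
      (htot : ∑ i ∈ suppSet P R c, b' i = (∑ i ∈ suppSet P R c, b i) - q) :
      STVStep P q ⟨R, W, b⟩ ⟨R.erase c, insert c W, b'⟩
  | eliminate (R W : Finset C) (b : N → ℝ) (c : C) (hc : c ∈ R)
      (hnone : ∀ c' ∈ R, (∑ i ∈ suppSet P R c', b i) ≤ q) :
      STVStep P q ⟨R, W, b⟩ ⟨R.erase c, W, b⟩

/-- `W` is a possible outcome of an execution of Approval-STV with quota `q`: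
starting from all candidates remaining, empty committee and unit budgets, some
sequence of steps ends with no candidate remaining and committee `W`. -/
def IsSTVOutcome (P : N → WeakOrder C) (q : ℝ) (W : Finset C) : Prop :=
  ∃ b : N → ℝ,
    Relation.ReflTransGen (STVStep P q) ⟨Finset.univ, ∅, fun _ => 1⟩ ⟨∅, W, b⟩

/-- The closure of `T` with respect to the voter group `S`. -/
noncomputable def closureSet (P : N → WeakOrder C) (S : Finset N) (T : Finset C) :
    Finset C :=
  Finset.univ.filter fun c => ∃ i ∈ S, ∃ t ∈ T, (P i).rel c t

end STV

/-- A weak order is `T`-supporting if every member of `T` is ranked weakly above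
every non-member. -/
def IsTSupporting {C : Type*} (w : WeakOrder C) (T : Finset C) : Prop :=
  ∀ t ∈ T, ∀ c, c ∉ T → w.rel t c

theorem WeakOrder.exists_top {C : Type*} (w : WeakOrder C) {A : Finset C} (hA : A.Nonempty) :
    ∃ t ∈ A, ∀ d ∈ A, w.rel t d := by
  induction hA using Finset.Nonempty.cons_induction with
  | singleton a => exact ⟨a, by simp, by simpa using w.total a a⟩
  | cons a s h hs ih =>
    obtain ⟨t, ht, htop⟩ := ih
    rcases w.total t a with hta | hat
    · refine ⟨t, by simp [ht], fun d hd => ?_⟩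
      rcases Finset.mem_cons.1 hd with rfl | hd
      exacts [hta, htop d hd]
    · refine ⟨a, by simp, fun d hd => ?_⟩
      rcases Finset.mem_cons.1 hd with rfl | hd
      exacts [(w.total _ _).elim id id, w.trans _ _ _ hat (htop d hd)]

section PSC

variable {C N : Type*} [Fintype C] [DecidableEq C] [Fintype N]

/-- A `T`-supporting voter supports some member of `R ∩ T`, if there is one: the best
candidates of `R ∩ T` are also best in `R`. -/
theorem exists_supported_of_TSupporting (P : N → WeakOrder C) {R T : Finset C} {i : N}
    (hi : IsTSupporting (P i) T) (hne : (R ∩ T).Nonempty) :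
    ∃ t ∈ R ∩ T, i ∈ suppSet P R t := by
  obtain ⟨t, ht, htop⟩ := (P i).exists_top hne
  refine ⟨t, ht, ?_⟩
  simp only [suppSet, Finset.mem_filter, Finset.mem_univ, true_and]
  intro d hd
  by_cases hdT : d ∈ T
  · exact htop d (Finset.mem_inter.2 ⟨hd, hdT⟩)
  · exact hi t (Finset.mem_inter.1 ht).2 d hdT

/-- If no candidate is eligible, a `T`-supporting group holds at most `q` per remaining
candidate of `T`. -/
theorem budget_le_of_no_eligible (P : N → WeakOrder C) {q : ℝ} {R T : Finset C} {S : Finset N}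
    {b : N → ℝ} (hb : ∀ i, 0 ≤ b i) (hsupp : ∀ i ∈ S, IsTSupporting (P i) T)
    (hne : (R ∩ T).Nonempty) (hnone : ∀ c ∈ R, ∑ i ∈ suppSet P R c, b i ≤ q) :
    ∑ i ∈ S, b i ≤ (R ∩ T).card * q := by
  -- `f i` is a member of `R ∩ T` supported by `i`; the values outside `S` play no role.
  have hex : ∀ i, ∃ t, i ∈ S → t ∈ R ∩ T ∧ i ∈ suppSet P R t := fun i => by
    by_cases hi : i ∈ S
    · obtain ⟨t, ht⟩ := exists_supported_of_TSupporting P (hsupp i hi) hne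
      exact ⟨t, fun _ => ht⟩
    · exact ⟨hne.choose, fun h => absurd h hi⟩
  choose f hf using hex
  calc ∑ i ∈ S, b i = ∑ t ∈ R ∩ T, ∑ i ∈ S with f i = t, b i :=
        (Finset.sum_fiberwise_of_maps_to (fun i hi => (hf i hi).1) b).symm
    _ ≤ ∑ t ∈ R ∩ T, ∑ i ∈ suppSet P R t, b i := by
        refine Finset.sum_le_sum fun t _ =>
          Finset.sum_le_sum_of_subset_of_nonneg (fun i hi => ?_) fun i _ _ => hb i
        obtain ⟨hiS, rfl⟩ := Finset.mem_filter.1 hi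
        exact (hf i hiS).2
    _ ≤ ∑ _t ∈ R ∩ T, q :=
        Finset.sum_le_sum fun t ht => hnone t (Finset.mem_inter.1 ht).1
    _ = (R ∩ T).card * q := by simp

/-- The invariant of an Approval-STV run for a group `S` supporting `T`: as long as fewer than
`ℓ` members of the closure are selected, enough candidates of `T` remain, and `S` has spent at
most `q` per selected member of the closure. -/
def STVInv (P : N → WeakOrder C) (q : ℝ) (ℓ : ℕ) (S : Finset N) (T : Finset C)
    (s : STVState C N) : Prop :=
  ℓ ≤ (s.W ∩ closureSet P S T).card ∨
    (Disjoint s.W s.R ∧ (∀ i, 0 ≤ s.b i) ∧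
      (S.card : ℝ) - q * (s.W ∩ closureSet P S T).card ≤ ∑ i ∈ S, s.b i ∧
      ℓ ≤ (s.W ∩ closureSet P S T).card + (s.R ∩ T).card)

theorem STVInv.step {P : N → WeakOrder C} {q : ℝ} {ℓ : ℕ} {S : Finset N} {T : Finset C}
    (hq : 0 ≤ q) (hS : (ℓ : ℝ) * q < S.card) (hsupp : ∀ i ∈ S, IsTSupporting (P i) T)
    {s s' : STVState C N} (hstep : STVStep P q s s') (hs : STVInv P q ℓ S T s) :
    STVInv P q ℓ S T s' := by
  cases hstep with
  | select R W b b' c hc helig hpay hdec hnn htot =>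
    rcases hs with hs | ⟨hdisj, hb, hbud, hcard⟩
    · exact Or.inl (hs.trans (Finset.card_le_card
        (Finset.inter_subset_inter_right (Finset.subset_insert _ _))))
    by_cases hlt : ℓ ≤ (W ∩ closureSet P S T).card
    · exact Or.inl (hlt.trans (Finset.card_le_card
        (Finset.inter_subset_inter_right (Finset.subset_insert _ _))))
    right
    dsimp only at hdisj hb hbud hcard ⊢
    have hcW : c ∉ W := fun h => Finset.disjoint_left.1 hdisj h hc
    have hdisj' : Disjoint (insert c W) (R.erase c) := by
      rw [Finset.disjoint_insert_left]
      exact ⟨Finset.notMem_erase _ _, hdisj.mono_right (Finset.erase_subset _ _)⟩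
    refine ⟨hdisj', hnn, ?_⟩
    have hne : (R ∩ T).Nonempty := Finset.card_pos.1 (by omega)
    by_cases hcK : c ∈ closureSet P S T
    · have hW : (insert c W ∩ closureSet P S T).card = (W ∩ closureSet P S T).card + 1 := by
        rw [Finset.insert_inter_of_mem hcK, Finset.card_insert_of_notMem]
        exact fun h => hcW (Finset.mem_inter.1 h).1
      have hspent : ∑ i ∈ S, (b i - b' i) ≤ q := by
        calc ∑ i ∈ S, (b i - b' i) ≤ ∑ i, (b i - b' i) :=
              Finset.sum_le_sum_of_subset_of_nonneg (Finset.subset_univ _)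
                fun i _ _ => sub_nonneg.2 (hdec i)
          _ = ∑ i ∈ suppSet P R c, (b i - b' i) :=
              (Finset.sum_subset (Finset.subset_univ _)
                fun i _ hi => sub_eq_zero.2 (hpay i hi).symm).symm
          _ = q := by rw [Finset.sum_sub_distrib, htot]; ring
      rw [Finset.sum_sub_distrib] at hspent
      have hRT : (R ∩ T).card ≤ (R.erase c ∩ T).card + 1 := by
        rw [Finset.erase_inter]
        exact tsub_le_iff_right.1 Finset.pred_card_le_card_erase
      rw [hW]
      push_cast
      exact ⟨by linarith, by omega⟩
    · -- A remaining member of `T` is ranked weakly below every candidate that a voter supports,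
      -- so no member of `S` supports `c ∉ K`.
      obtain ⟨t, ht⟩ := hne
      rw [Finset.mem_inter] at ht
      have hnot : ∀ i ∈ S, i ∉ suppSet P R c := fun i hi h => hcK <| by
        simp only [suppSet, Finset.mem_filter, Finset.mem_univ, true_and] at h
        simp only [closureSet, Finset.mem_filter, Finset.mem_univ, true_and]
        exact ⟨i, hi, t, ht.2, h t ht.1⟩
      have hSb : ∑ i ∈ S, b' i = ∑ i ∈ S, b i :=
        Finset.sum_congr rfl fun i hi => hpay i (hnot i hi)
      have hcT : c ∉ T := fun hcT => by
        have hSpos : 0 < S.card := by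
          exact_mod_cast (mul_nonneg (Nat.cast_nonneg ℓ) hq).trans_lt hS
        obtain ⟨i, hi⟩ := Finset.card_pos.1 hSpos
        refine hcK ?_
        simp only [closureSet, Finset.mem_filter, Finset.mem_univ, true_and]
        exact ⟨i, hi, c, hcT, ((P i).total c c).elim id id⟩
      rw [Finset.insert_inter_of_notMem hcK, hSb, Finset.erase_inter,
        Finset.erase_eq_of_notMem fun h => hcT (Finset.mem_inter.1 h).2]
      exact ⟨hbud, hcard⟩
  | eliminate R W b c hc hnone =>
    rcases hs with hs | ⟨hdisj, hb, hbud, hcard⟩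
    · exact Or.inl hs
    by_cases hlt : ℓ ≤ (W ∩ closureSet P S T).card
    · exact Or.inl hlt
    right
    dsimp only at hdisj hb hbud hcard ⊢
    refine ⟨hdisj.mono_right (Finset.erase_subset _ _), hb, hbud, ?_⟩
    have hne : (R ∩ T).Nonempty := Finset.card_pos.1 (by omega)
    have hle := budget_le_of_no_eligible P hb hsupp hne hnone
    -- `|W ∩ K| + |R ∩ T| = ℓ` would force `|S| ≤ ℓ * q`.
    have hstrict : ℓ ≠ (W ∩ closureSet P S T).card + (R ∩ T).card := fun h => by
      have h' : (ℓ : ℝ) = (W ∩ closureSet P S T).card + (R ∩ T).card := by exact_mod_cast h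
      rw [h'] at hS
      linarith
    have hRT : (R ∩ T).card ≤ (R.erase c ∩ T).card + 1 := by
      rw [Finset.erase_inter]
      exact tsub_le_iff_right.1 Finset.pred_card_le_card_erase
    omega

end PSC

/-- Approval-STV satisfies generalized Proportionality for
Solid Coalitions: for every committee `W` returned by any execution of
Approval-STV with quota `q = n/(k+1)`, every `ℓ ≥ 1`, every voter group `S`
with `|S| > ℓ·q`, and every `T` with `|T| ≥ ℓ` such that `S` is `T`-supporting,
we have `|W ∩ closure_S(T)| ≥ ℓ`. -/
theorem approvalSTV_satisfies_generalized_PSC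
    {C N : Type*} [Fintype C] [DecidableEq C] [Fintype N]
    (k : ℕ) (P : N → WeakOrder C) (W : Finset C)
    (hW : IsSTVOutcome P ((Fintype.card N : ℝ) / (k + 1)) W)
    (ℓ : ℕ) (hℓ : 1 ≤ ℓ) (S : Finset N) (T : Finset C)
    (hS : (ℓ : ℝ) * ((Fintype.card N : ℝ) / (k + 1)) < S.card)
    (hT : ℓ ≤ T.card)
    (hsupp : ∀ i ∈ S, IsTSupporting (P i) T) :
    ℓ ≤ (W ∩ closureSet P S T).card := by
  obtain ⟨b, hrun⟩ := hW
  have hq : (0 : ℝ) ≤ (Fintype.card N : ℝ) / (k + 1) := by positivity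
  have hinv : STVInv P ((Fintype.card N : ℝ) / (k + 1)) ℓ S T ⟨∅, W, b⟩ := by
    generalize (⟨∅, W, b⟩ : STVState C N) = s at hrun ⊢
    induction hrun with
    | refl => exact Or.inr ⟨by simp, by simp, by simp, by simpa using hT⟩
    | tail _ hstep ih => exact STVInv.step hq hS hsupp hstep ih
  rcases hinv with h | ⟨-, -, -, h⟩
  · exact h
  · simpa using h
end

section
/- Split-STV fails generalized Proportionality for Solid Coalitions, even for committee size k = 1: there exist a profile of weak orders (namely the 37-voter profile over {a,b,c,d} with 9 votes {a,b,c} ≻ {d}, 5 votes {a,b} ≻ {d} ≻ {c}, 5 votes {a,c} ≻ {d} ≻ {b}, 8 votes {b,c,d} ≻ {a}, and 10 votes {d} ≻ {a,b,c}), a set S of voters with |S| > q = n/2 (the 19 voters of the first three groups), and a singleton T = {a} with S being T-supporting, such that the committee {w} selected by Split-STV satisfies w ∉ closure_S(T) = {a,b,c}. -/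
/-!
For an arbitrary weak order, the split score of a candidate `a ∈ A` depends only on the top
indifference class: it is `1 / |top|` when `a` belongs to that class and the class is not all of
`A`, and `0` otherwise (`splitScoring_orderType`).  The total scores in the 37-voter profile are
then weighted sums over the five ballot types (`sum_majProfile`), and the elimination runs as
follows, with scores listed for the remaining candidates in the order `a, b, c, d`.

* On `{a, b, c, d}` the scores are `8, 49/6, 49/6, 38/3`, so `a` is eliminated.
* On `{b, c, d}` they are `19/2, 19/2, 10`, so `b` and `c` tie for elimination.
* On `{c, d}`, and symmetrically on `{b, d}`, they are `14, 15`, so `d` survives.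

Hence `d` is the unique winner under every tie-breaking.  The first 19 voters, a strict majority,
all rank `a` on top but all rank `d` strictly below `a`, so `d` lies outside their closure of `{a}`.
-/


open Finset

attribute [local instance] Classical.propDecidable

/-- The 37-voter profile over `a = 0`, `b = 1`, `c = 2`, `d = 3`:
9 votes `{a,b,c} ≻ {d}`, 5 votes `{a,b} ≻ {d} ≻ {c}`, 5 votes `{a,c} ≻ {d} ≻ {b}`,
8 votes `{b,c,d} ≻ {a}`, 10 votes `{d} ≻ {a,b,c}`. -/
def majProfile : Fin 37 → WeakOrder (Fin 4) := fun i =>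
  if i.val < 9 then ofRank ![0, 0, 0, 1]
  else if i.val < 14 then ofRank ![0, 0, 2, 1]
  else if i.val < 19 then ofRank ![0, 2, 0, 1]
  else if i.val < 27 then ofRank ![1, 0, 0, 0]
  else ofRank ![1, 1, 1, 0]

section TopClass

variable {C : Type*}

theorem WeakOrder.cardAbove_eq_zero_iff (w : WeakOrder C) {A : Finset C} {a : C} :
    w.cardAbove A a = 0 ↔ ∀ d ∈ A, w.rel a d := by
  unfold WeakOrder.cardAbove
  rw [Finset.card_eq_zero, Finset.filter_eq_empty_iff]
  refine forall₂_congr fun d _ => ?_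
  unfold WeakOrder.strict
  have := w.total a d
  tauto

theorem WeakOrder.classIdx_eq_zero_iff (w : WeakOrder C) {A : Finset C} {a : C} :
    w.classIdx A a = 0 ↔ ∀ d ∈ A, w.rel a d := by
  rw [← w.cardAbove_eq_zero_iff]
  unfold WeakOrder.classIdx WeakOrder.cardAbove
  rw [Finset.card_eq_zero, Finset.image_eq_empty, Finset.card_eq_zero]

theorem WeakOrder.length_orderType (w : WeakOrder C) (A : Finset C) :
    (w.orderType A).length = w.numClasses A := by
  simp [WeakOrder.orderType]

theorem WeakOrder.headI_orderType (w : WeakOrder C) {A : Finset C} (h : 0 < w.numClasses A) :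
    (w.orderType A).headI = (w.topSet A).card := by
  obtain ⟨m, hm⟩ := Nat.exists_eq_succ_of_ne_zero h.ne'
  simp only [WeakOrder.orderType, hm, List.range_succ_eq_map, List.map_cons, List.headI_cons,
    WeakOrder.topSet, w.classIdx_eq_zero_iff]

/-- When `a` is a top candidate, there are at least two indifference classes exactly when some
candidate is strictly below `a`. -/
theorem WeakOrder.two_le_numClasses_iff (w : WeakOrder C) {A : Finset C} {a : C} (ha : a ∈ A)
    (htop : ∀ d ∈ A, w.rel a d) :
    2 ≤ w.numClasses A ↔ ∃ d ∈ A, ¬ w.rel d a := by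
  unfold WeakOrder.numClasses
  rw [Nat.succ_le_iff, Finset.one_lt_card]
  constructor
  · rintro ⟨x, hx, y, hy, hxy⟩
    by_contra! hall
    have key : ∀ z ∈ A.image (w.cardAbove A), z = 0 := by
      intro z hz
      obtain ⟨c, hc, rfl⟩ := Finset.mem_image.1 hz
      exact w.cardAbove_eq_zero_iff.2 fun d hd => w.trans _ _ _ (hall c hc) (htop d hd)
    exact hxy ((key x hx).trans (key y hy).symm)
  · rintro ⟨d, hd, hda⟩
    refine ⟨_, Finset.mem_image_of_mem _ ha, _, Finset.mem_image_of_mem _ hd, fun h => hda ?_⟩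
    rw [w.cardAbove_eq_zero_iff.2 htop] at h
    exact w.cardAbove_eq_zero_iff.1 h.symm a ha

/-- The share of its vote that the ballot `w` gives to `a` on `A`: the vote is split equally among
the top class of `w`, and a ballot that is indifferent on all of `A` gives nothing. -/
noncomputable def topShare (w : WeakOrder C) (A : Finset C) (a : C) : ℝ :=
  if (∀ d ∈ A, w.rel a d) ∧ ∃ d ∈ A, ¬ w.rel d a then ((w.topSet A).card : ℝ)⁻¹ else 0

/-- The split score in terms of the top indifference class alone. -/
theorem splitScoring_orderType (w : WeakOrder C) {A : Finset C} {a : C} (ha : a ∈ A) :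
    splitScoring (w.orderType A) (w.classIdx A a) =
      topShare w A a := by
  unfold splitScoring topShare
  simp only [w.classIdx_eq_zero_iff, w.length_orderType]
  by_cases htop : ∀ d ∈ A, w.rel a d
  · have h2 := w.two_le_numClasses_iff ha htop
    by_cases hd : ∃ d ∈ A, ¬ w.rel d a
    · rw [if_pos ⟨htop, h2.2 hd⟩, if_pos ⟨htop, hd⟩, w.headI_orderType (by have := h2.2 hd; omega)]
    · rw [if_neg fun h => hd (h2.1 h.2), if_neg fun h => hd h.2]
  · rw [if_neg fun h => htop h.1, if_neg fun h => htop h.1]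

end TopClass

/-- A sum over the voters of `majProfile` is a weighted sum over the five ballot types. -/
theorem sum_majProfile (g : WeakOrder (Fin 4) → ℝ) :
    ∑ i, g (majProfile i) =
      9 * g (ofRank ![0, 0, 0, 1]) + 5 * g (ofRank ![0, 0, 2, 1]) +
        5 * g (ofRank ![0, 2, 0, 1]) + 8 * g (ofRank ![1, 0, 0, 0]) +
        10 * g (ofRank ![1, 1, 1, 0]) := by
  simp [Fin.sum_univ_succ, majProfile]
  ring

theorem totalScore_majProfile {A : Finset (Fin 4)} {a : Fin 4} (ha : a ∈ A) :
    totalScore splitScoring majProfile A a =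
      9 * topShare (ofRank ![0, 0, 0, 1]) A a + 5 * topShare (ofRank ![0, 0, 2, 1]) A a +
        5 * topShare (ofRank ![0, 2, 0, 1]) A a + 8 * topShare (ofRank ![1, 0, 0, 0]) A a +
        10 * topShare (ofRank ![1, 1, 1, 0]) A a := by
  rw [← sum_majProfile fun w => topShare w A a]
  exact Finset.sum_congr rfl fun i _ => splitScoring_orderType _ ha

theorem score_abcd :
    totalScore splitScoring majProfile {0, 1, 2, 3} 0 = 8 ∧
    totalScore splitScoring majProfile {0, 1, 2, 3} 1 = 49 / 6 ∧
    totalScore splitScoring majProfile {0, 1, 2, 3} 2 = 49 / 6 ∧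
    totalScore splitScoring majProfile {0, 1, 2, 3} 3 = 38 / 3 := by
  refine ⟨?_, ?_, ?_, ?_⟩ <;> rw [totalScore_majProfile (by simp)] <;>
    simp [topShare, WeakOrder.topSet, ofRank, Finset.filter_insert, Finset.filter_singleton] <;>
    norm_num

theorem score_bcd :
    totalScore splitScoring majProfile {1, 2, 3} 1 = 19 / 2 ∧
    totalScore splitScoring majProfile {1, 2, 3} 2 = 19 / 2 ∧
    totalScore splitScoring majProfile {1, 2, 3} 3 = 10 := by
  refine ⟨?_, ?_, ?_⟩ <;> rw [totalScore_majProfile (by simp)] <;>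
    simp [topShare, WeakOrder.topSet, ofRank, Finset.filter_insert, Finset.filter_singleton] <;>
    norm_num

theorem score_cd :
    totalScore splitScoring majProfile {2, 3} 2 = 14 ∧
    totalScore splitScoring majProfile {2, 3} 3 = 15 := by
  refine ⟨?_, ?_⟩ <;> rw [totalScore_majProfile (by simp)] <;>
    simp [topShare, WeakOrder.topSet, ofRank, Finset.filter_insert, Finset.filter_singleton] <;>
    norm_num

theorem score_bd :
    totalScore splitScoring majProfile {1, 3} 1 = 14 ∧
    totalScore splitScoring majProfile {1, 3} 3 = 15 := by
  refine ⟨?_, ?_⟩ <;> rw [totalScore_majProfile (by simp)] <;>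
    simp [topShare, WeakOrder.topSet, ofRank, Finset.filter_insert, Finset.filter_singleton] <;>
    norm_num

theorem lowest_abcd : lowest splitScoring majProfile {0, 1, 2, 3} = {0} := by
  obtain ⟨h0, h1, h2, h3⟩ := score_abcd
  simp only [lowest, Finset.filter_insert, Finset.filter_singleton, Finset.forall_mem_insert,
    Finset.mem_singleton, forall_eq, h0, h1, h2, h3]
  norm_num

theorem lowest_bcd : lowest splitScoring majProfile {1, 2, 3} = {1, 2} := by
  obtain ⟨h1, h2, h3⟩ := score_bcd
  simp only [lowest, Finset.filter_insert, Finset.filter_singleton, Finset.forall_mem_insert,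
    Finset.mem_singleton, forall_eq, h1, h2, h3]
  norm_num

theorem lowest_cd : lowest splitScoring majProfile {2, 3} = {2} := by
  obtain ⟨h2, h3⟩ := score_cd
  simp only [lowest, Finset.filter_insert, Finset.filter_singleton, Finset.forall_mem_insert,
    Finset.mem_singleton, forall_eq, h2, h3]
  norm_num

theorem lowest_bd : lowest splitScoring majProfile {1, 3} = {1} := by
  obtain ⟨h1, h3⟩ := score_bd
  simp only [lowest, Finset.filter_insert, Finset.filter_singleton, Finset.forall_mem_insert,
    Finset.mem_singleton, forall_eq, h1, h3]
  norm_num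

theorem winners_majProfile : winners splitScoring majProfile Finset.univ = {3} := by
  have hu : (Finset.univ : Finset (Fin 4)) = {0, 1, 2, 3} := by decide
  have e0 : ({0, 1, 2, 3} : Finset (Fin 4)).erase 0 = {1, 2, 3} := by decide
  have e1 : ({1, 2, 3} : Finset (Fin 4)).erase 1 = {2, 3} := by decide
  have e2 : ({1, 2, 3} : Finset (Fin 4)).erase 2 = {1, 3} := by decide
  have e3 : ({2, 3} : Finset (Fin 4)).erase 2 = {3} := by decide
  have e4 : ({1, 3} : Finset (Fin 4)).erase 1 = {3} := by decide
  have c0 : ({0, 1, 2, 3} : Finset (Fin 4)).card = 4 := by decide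
  have c1 : ({1, 2, 3} : Finset (Fin 4)).card = 3 := by decide
  have c2 : ({2, 3} : Finset (Fin 4)).card = 2 := by decide
  have c3 : ({1, 3} : Finset (Fin 4)).card = 2 := by decide
  rw [hu]
  simp [winners, winnersAux, c0, c1, c2, c3, lowest_abcd, lowest_bcd, lowest_cd, lowest_bd,
    e0, e1, e2, e3, e4, Finset.biUnion_insert]

/-- Each of the first 19 voters ranks `a` on top. -/
theorem majProfile_rel_zero {i : Fin 37} (hi : i.val < 19) (c : Fin 4) :
    (majProfile i).rel 0 c := by
  unfold majProfile
  split_ifs <;> simp [ofRank]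

theorem closureSet_majProfile :
    closureSet majProfile (Finset.univ.filter fun i => i.val < 19) {0} = {0, 1, 2} := by
  ext c
  simp only [closureSet, Finset.mem_filter, Finset.mem_univ, true_and, Finset.mem_singleton,
    exists_eq_left, Finset.mem_insert]
  constructor
  · rintro ⟨i, hi, h⟩
    unfold majProfile at h
    split_ifs at h <;> fin_cases c <;> simp [ofRank] at h ⊢
  · intro h
    refine ⟨0, by simp, ?_⟩
    rcases h with rfl | rfl | rfl <;> simp [majProfile, ofRank]

/-- Split-STV fails generalized PSC even for committee size
`k = 1` (where it coincides with Split-IRV): in `majProfile`, the group `S` of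
the first 19 voters satisfies `|S| > q = n/2 = 37/2` and is `T`-supporting for
`T = {a} = {0}` with `closure_S(T) = {a,b,c} = {0,1,2}`, yet the committee
selected by Split-STV is `{d} = {3}` and `d ∉ closure_S(T)`, so
`|W ∩ closure_S(T)| = 0 < 1 = ℓ`. -/
theorem splitSTV_fails_generalized_PSC :
    let S : Finset (Fin 37) := Finset.univ.filter fun i => i.val < 19
    let T : Finset (Fin 4) := {0}
    (1 : ℝ) * ((37 : ℝ) / 2) < S.card ∧
    (∀ i ∈ S, IsTSupporting (majProfile i) T) ∧
    closureSet majProfile S T = {0, 1, 2} ∧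
    winners splitScoring majProfile Finset.univ = {3} ∧
    ((winners splitScoring majProfile Finset.univ) ∩
        closureSet majProfile S T).card < 1 := by
  intro S T
  refine ⟨?_, ?_, closureSet_majProfile, winners_majProfile, ?_⟩
  · have hS : S.card = 19 := by
      simp only [S]
      rw [Fin.card_filter_val_lt]
      rfl
    rw [hS]
    norm_num
  · intro i hi t ht c _
    rw [Finset.mem_singleton.1 ht]
    exact majProfile_rel_zero (Finset.mem_filter.1 hi).2 c
  · rw [winners_majProfile, closureSet_majProfile]
    decide
end

section
/- Respect for cohesive majorities implies the weak defensive strategy criterion: let f be a voting rule on profiles of weak orders that respects cohesive majorities. Then for every profile P, every pair of candidates a, b, and every set S ⊆ N with |S| > n/2 such that a ≻ᵢ b for all i ∈ S, there exists a profile P′ that agrees with P on all voters outside S, in which each voter i ∈ S reports the sincere coarsening of ≽ᵢ obtained by merging into a single top indifference class all candidates strictly preferred to b by voter i (leaving the rest of the order unchanged), such that b ∉ f(P′). -/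
/-!
After every voter in the majority `S` merges the candidates strictly preferred to `b` into one
top class, the top class of each voter in `S` is exactly the set of candidates that voter strictly
prefers to `b`. It contains `a`, so `S` is a cohesive majority and every winner lies in one of
these top classes; none of them contains `b`.
-/

open Finset

attribute [local instance] Classical.propDecidable

/-- `f` respects cohesive majorities: whenever a set `S` of more than half of
the voters all rank some common candidate in their top indifference class,
every winner is a top candidate of some voter in `S`. -/
def RespectsCohesiveMajorities {C N : Type*} [Fintype C] [Fintype N]
    (f : (N → WeakOrder C) → Finset C) : Prop :=
  ∀ (P : N → WeakOrder C) (S : Finset N),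
    Fintype.card N < 2 * S.card →
    (∃ c, ∀ i ∈ S, c ∈ (P i).topSet Finset.univ) →
    f P ⊆ S.biUnion fun i => (P i).topSet Finset.univ

/-- Respect for cohesive majorities implies the weak
defensive strategy criterion: if `f` respects cohesive majorities and a
majority `S` strictly prefers `a` to `b`, then the profile in which each voter
of `S` sincerely coarsens their order by merging all candidates they strictly
prefer to `b` into a single top indifference class (others voting as in `P`)
makes `b` lose. -/
theorem cohesive_majorities_implies_weak_defensive_strategy
    {C N : Type*} [Fintype C] [DecidableEq C] [Fintype N]
    (f : (N → WeakOrder C) → Finset C)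
    (hf : RespectsCohesiveMajorities f)
    (P : N → WeakOrder C) (a b : C) (S : Finset N)
    (hS : Fintype.card N < 2 * S.card)
    (hab : ∀ i ∈ S, (P i).strict a b) :
    ∃ P' : N → WeakOrder C,
      (∀ i ∉ S, P' i = P i) ∧
      (∀ i ∈ S, P' i = mergeAbove (P i) b) ∧
      b ∉ f P' := by
  classical
  refine ⟨fun i => if i ∈ S then mergeAbove (P i) b else P i,
    fun i hi => if_neg hi, fun i hi => if_pos hi, fun hb => ?_⟩
  -- In the coarsened profile `a` is a common top candidate of the majority `S`.
  have hsub := hf _ S hS ⟨a, fun i hi => by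
    simp only [hi, if_true, WeakOrder.topSet, Finset.mem_filter]
    exact ⟨Finset.mem_univ a, fun d _ => Or.inl (hab i hi)⟩⟩ hb
  -- The union in `RespectsCohesiveMajorities` is taken with the classical `DecidableEq C`
  -- instance, not the one in the context.
  obtain ⟨i, hi, hbi⟩ :=
    (@Finset.mem_biUnion _ _ _ _ (fun x y => Classical.propDecidable (x = y)) _).mp hsub
  simp only [hi, if_true, WeakOrder.topSet, Finset.mem_filter] at hbi
  -- `b` being top for `i ∈ S` would mean that `i` ranks `b` strictly above itself,
  -- or does not rank `a` strictly above `b`.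
  rcases hbi.2 a (Finset.mem_univ a) with h | h
  · exact h.2 h.1
  · exact h.1 (hab i hi)
end

section
/- Approval-IRV fails the axiom of selecting some majority alternative: there exists a profile in which some candidate is ranked in the top indifference class by a strict majority of voters, yet the Approval-IRV winner is not ranked in the top indifference class by any majority of voters. Concretely, in the 100-voter profile over {a,b,c,d} with 47 votes {a,b} ≻ {c} ≻ {d}, 4 votes {a} ≻ {b} ≻ {c} ≻ {d}, 25 votes {c} ≻ {b} ≻ {d} ≻ {a}, and 24 votes {d} ≻ {b} ≻ {c} ≻ {a}, candidate a is top-ranked by 51 voters, but ApprovalIRV(P) = {b}, and b is top-ranked by only 47 voters. -/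
/-!
The 100 ballots take only four values, so every quantity in the claim is a weighted sum over four
rank functions (`sum_majAltProfile`). On a ballot given by a rank function, lying in class `0` means
having minimal rank, and the order type has length at least `2` exactly when two candidates have
different ranks (`approvalScoring_ofRank`); hence all real-valued scores equal the computable natural
numbers `tally` (`totalScore_majAltProfile`). Each of the three elimination rounds then has a unique
loser, found by evaluation: `d`, then `c`, then `a`, which leaves `b`.
-/

open Finset

attribute [local instance] Classical.propDecidable

/-- The 100-voter profile over `a = 0`, `b = 1`, `c = 2`, `d = 3`:
47 votes `{a,b} ≻ {c} ≻ {d}`, 4 votes `a ≻ b ≻ c ≻ d`,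
25 votes `c ≻ b ≻ d ≻ a`, 24 votes `d ≻ b ≻ c ≻ a`. -/
def majAltProfile : Fin 100 → WeakOrder (Fin 4) := fun i =>
  if i.val < 47 then ofRank ![0, 0, 1, 2]
  else if i.val < 51 then ofRank ![0, 1, 2, 3]
  else if i.val < 76 then ofRank ![3, 1, 0, 2]
  else ofRank ![3, 1, 2, 0]

/-- The points one voter with rank function `ρ` gives to `a` under Approval-IRV among `A`, as a
decidable condition: `a` has minimal rank, and the voter is not indifferent on all of `A`. -/
def rankPoint (ρ : Fin 4 → ℕ) (A : Finset (Fin 4)) (a : Fin 4) : ℕ :=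
  if (∀ b ∈ A, ρ a ≤ ρ b) ∧ ∃ x ∈ A, ∃ y ∈ A, ρ x < ρ y then 1 else 0

/-- The Approval-IRV score of `a` among `A` in `majAltProfile`, with voters grouped by ballot. -/
def tally (A : Finset (Fin 4)) (a : Fin 4) : ℕ :=
  47 * rankPoint ![0, 0, 1, 2] A a + 4 * rankPoint ![0, 1, 2, 3] A a +
    25 * rankPoint ![3, 1, 0, 2] A a + 24 * rankPoint ![3, 1, 2, 0] A a

theorem strict_ofRank {C : Type*} (ρ : C → ℕ) (a b : C) :
    (ofRank ρ).strict a b ↔ ρ a < ρ b := by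
  simp only [WeakOrder.strict, ofRank]
  omega

theorem classIdx_ofRank_eq_zero (ρ : Fin 4 → ℕ) (A : Finset (Fin 4)) (a : Fin 4) :
    (ofRank ρ).classIdx A a = 0 ↔ ∀ b ∈ A, ρ a ≤ ρ b := by
  simp [WeakOrder.classIdx, strict_ofRank, Finset.filter_eq_empty_iff]

theorem cardAbove_ofRank_lt {ρ : Fin 4 → ℕ} {A : Finset (Fin 4)} {x y : Fin 4} (hx : x ∈ A)
    (h : ρ x < ρ y) : (ofRank ρ).cardAbove A x < (ofRank ρ).cardAbove A y := by
  simp only [WeakOrder.cardAbove, strict_ofRank]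
  apply Finset.card_lt_card
  rw [Finset.ssubset_iff_of_subset
    (Finset.monotone_filter_right A fun b _ (hb : ρ b < ρ x) => hb.trans h)]
  exact ⟨x, by simp [hx, h], by simp⟩

theorem two_le_length_orderType_ofRank (ρ : Fin 4 → ℕ) (A : Finset (Fin 4)) :
    2 ≤ ((ofRank ρ).orderType A).length ↔ ∃ x ∈ A, ∃ y ∈ A, ρ x < ρ y := by
  have hlen : ((ofRank ρ).orderType A).length = (A.image ((ofRank ρ).cardAbove A)).card := by
    simp [WeakOrder.orderType, WeakOrder.numClasses]
  rw [hlen, Nat.succ_le_iff, Finset.one_lt_card]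
  constructor
  · rintro ⟨_, hu, _, hv, huv⟩
    obtain ⟨x, hx, rfl⟩ := Finset.mem_image.1 hu
    obtain ⟨y, hy, rfl⟩ := Finset.mem_image.1 hv
    rcases lt_trichotomy (ρ x) (ρ y) with h | h | h
    · exact ⟨x, hx, y, hy, h⟩
    · exact absurd (by simp only [WeakOrder.cardAbove, strict_ofRank, h]) huv
    · exact ⟨y, hy, x, hx, h⟩
  · rintro ⟨x, hx, y, hy, h⟩
    exact ⟨_, Finset.mem_image_of_mem _ hx, _, Finset.mem_image_of_mem _ hy,
      (cardAbove_ofRank_lt hx h).ne⟩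

theorem approvalScoring_ofRank (ρ : Fin 4 → ℕ) (A : Finset (Fin 4)) (a : Fin 4) :
    approvalScoring ((ofRank ρ).orderType A) ((ofRank ρ).classIdx A a) = rankPoint ρ A a := by
  simp only [approvalScoring, rankPoint, classIdx_ofRank_eq_zero, two_le_length_orderType_ofRank]
  split_ifs <;> simp

/-- Summing a function of the ballot over the 100 voters groups them by ballot. -/
theorem sum_majAltProfile {M : Type*} [AddCommMonoid M] (f : WeakOrder (Fin 4) → M) :
    ∑ i, f (majAltProfile i) =
      47 • f (ofRank ![0, 0, 1, 2]) + 4 • f (ofRank ![0, 1, 2, 3]) +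
        25 • f (ofRank ![3, 1, 0, 2]) + 24 • f (ofRank ![3, 1, 2, 0]) := by
  -- `Fin 100` is cut into consecutive blocks of lengths 47, 4, 25 and 24.
  rw [show (∑ i, f (majAltProfile i)) =
    ∑ i : Fin (47 + 4 + 25 + 24), f (majAltProfile i) from rfl]
  simp only [Fin.sum_univ_add]
  congr 1
  · congr 1
    · congr 1
      · rw [Finset.sum_congr rfl (g := fun _ => f (ofRank ![0, 0, 1, 2]))]
        · simp
        · intro i _
          simp [majAltProfile]
      · rw [Finset.sum_congr rfl (g := fun _ => f (ofRank ![0, 1, 2, 3]))]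
        · simp
        · intro i _
          have h1 : 47 + i.val < 51 := by omega
          simp [majAltProfile, h1]
    · rw [Finset.sum_congr rfl (g := fun _ => f (ofRank ![3, 1, 0, 2]))]
      · simp
      · intro i _
        have h1 : ¬ 51 + i.val < 47 := by omega
        have h3 : 51 + i.val < 76 := by omega
        simp [majAltProfile, h1, h3]
  · rw [Finset.sum_congr rfl (g := fun _ => f (ofRank ![3, 1, 2, 0]))]
    · simp
    · intro i _
      have h1 : ¬ 76 + i.val < 47 := by omega
      have h2 : ¬ 76 + i.val < 51 := by omega
      simp [majAltProfile, h1, h2]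

theorem totalScore_majAltProfile (A : Finset (Fin 4)) (a : Fin 4) :
    totalScore approvalScoring majAltProfile A a = tally A a := by
  rw [totalScore, sum_majAltProfile
    (fun w => approvalScoring (w.orderType A) (w.classIdx A a))]
  simp [approvalScoring_ofRank, tally]

/-- One elimination round with a unique loser `c` according to `tally`. -/
theorem winnersAux_step (n : ℕ) (A : Finset (Fin 4)) (c : Fin 4) (hA : 1 < A.card)
    (hc : c ∈ A) (hmin : ∀ d ∈ A, d ≠ c → tally A c < tally A d) :
    winnersAux approvalScoring majAltProfile (n + 1) A =
      winnersAux approvalScoring majAltProfile n (A.erase c) := by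
  have hlow : lowest approvalScoring majAltProfile A = {c} := by
    ext x
    simp only [lowest, totalScore_majAltProfile, Nat.cast_le, Finset.mem_filter,
      Finset.mem_singleton]
    constructor
    · rintro ⟨hx, h⟩
      by_contra hne
      exact absurd (h c hc) (not_le.2 (hmin x hx hne))
    · rintro rfl
      refine ⟨hc, fun d hd => ?_⟩
      by_cases hdx : d = x
      · rw [hdx]
      · exact (hmin d hd hdx).le
  rw [winnersAux, if_neg (not_le.2 hA), hlow, Finset.singleton_biUnion]

/-- The candidates `d`, `c`, `a` are eliminated in this order. The rounds have scores
`(51, 47, 25, 24)`, `(51, 71, 25)` and `(4, 49)`; in the last one the 47 voters who are indifferent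
between `a` and `b` contribute nothing. -/
theorem winners_majAltProfile :
    winners approvalScoring majAltProfile Finset.univ = {1} := by
  have e1 : (Finset.univ : Finset (Fin 4)).erase 3 = {0, 1, 2} := by decide +kernel
  have e2 : ({0, 1, 2} : Finset (Fin 4)).erase 2 = {0, 1} := by decide +kernel
  have e3 : ({0, 1} : Finset (Fin 4)).erase 0 = {1} := by decide +kernel
  rw [winners, show (Finset.univ : Finset (Fin 4)).card = 3 + 1 from rfl,
    winnersAux_step 3 _ 3 (by decide +kernel) (by decide +kernel) (by decide +kernel), e1,
    winnersAux_step 2 _ 2 (by decide +kernel) (by decide +kernel) (by decide +kernel), e2,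
    winnersAux_step 1 _ 0 (by decide +kernel) (by decide +kernel) (by decide +kernel), e3,
    winnersAux]
  simp

/-- On the full candidate set no ballot is totally indifferent, so counting the voters with `a` on
top gives the Approval-IRV score of `a`. -/
theorem card_top_majAltProfile (a : Fin 4) :
    (Finset.univ.filter fun i => a ∈ (majAltProfile i).topSet Finset.univ).card =
      tally Finset.univ a := by
  have key (ρ : Fin 4 → ℕ) (h : ∃ x y, ρ x < ρ y) :
      (if a ∈ (ofRank ρ).topSet Finset.univ then 1 else 0) = rankPoint ρ Finset.univ a := by
    simp only [WeakOrder.topSet, Finset.mem_filter, Finset.mem_univ, true_and, ofRank, rankPoint]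
    congr 1
    simpa using fun _ => h
  rw [Finset.card_filter, sum_majAltProfile
    (fun w => if a ∈ w.topSet Finset.univ then 1 else 0), key _ ⟨0, 2, by decide⟩,
    key _ ⟨0, 1, by decide⟩, key _ ⟨2, 1, by decide⟩, key _ ⟨3, 1, by decide⟩]
  simp [tally]

/-- Approval-IRV fails 'select some majority alternative': in
`majAltProfile`, candidate `a = 0` is top-ranked by 51 voters (a strict
majority), but the unique Approval-IRV winner is `b = 1`, which is top-ranked
by only 47 voters (not a majority). -/
theorem approvalIRV_fails_select_majority_alternative :
    (Finset.univ.filter fun i =>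
      (0 : Fin 4) ∈ (majAltProfile i).topSet Finset.univ).card = 51 ∧
    Fintype.card (Fin 100) <
      2 * (Finset.univ.filter fun i =>
        (0 : Fin 4) ∈ (majAltProfile i).topSet Finset.univ).card ∧
    winners approvalScoring majAltProfile Finset.univ = {1} ∧
    (Finset.univ.filter fun i =>
      (1 : Fin 4) ∈ (majAltProfile i).topSet Finset.univ).card = 47 ∧
    ¬ (Fintype.card (Fin 100) <
        2 * (Finset.univ.filter fun i =>
          (1 : Fin 4) ∈ (majAltProfile i).topSet Finset.univ).card) := by
  have ha : tally Finset.univ 0 = 51 := by decide +kernel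
  have hb : tally Finset.univ 1 = 47 := by decide +kernel
  simp only [card_top_majAltProfile, ha, hb, winners_majAltProfile, Fintype.card_fin]
  norm_num
end
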